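/- arXiv:1302.0071 — 2 statements merged into one kernel-verified Lean document; each statement's English description precedes it below -/
import Mathlib

section
/- Let F be a field whose characteristic is either zero or a prime p > h, where h ≥ 1 is an integer. If a₁, …, a_h and b₁, …, b_h are elements of F such that a₁^k + a₂^k + ⋯ + a_h^k = b₁^k + b₂^k + ⋯ + b_h^k for every k = 1, 2, …, h, then the multiset {a₁, …, a_h} equals the multiset {b₁, …, b_h}. -/
/-- `A` is a `B_h[g]` set in the additive commutative monoid `G`: every element `x` of `G`
has at most `g` representations as a sum of `h` elements of `A`, where representations
differing only in the order of summands are identified; i.e., for each `x : G` there are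
at most `g` multisets of size `h`, with all elements in `A`, whose sum is `x`. -/
def IsBhSet {G : Type*} [AddCommMonoid G] (A : Set G) (h g : ℕ) : Prop :=
  ∀ x : G, ∀ S : Finset (Multiset G),
    (∀ s ∈ S, Multiset.card s = h ∧ (∀ a ∈ s, a ∈ A) ∧ s.sum = x) → S.card ≤ g

section PowerSums

open Finset.HasAntidiagonal (antidiagonal mem_antidiagonal)

variable {R : Type*} [CommRing R]

theorem natCast_mul_multiset_esymm_eq_sum (s : Multiset R) (k : ℕ) :
    (k : R) * s.esymm k = (-1) ^ (k + 1) *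
      ∑ p ∈ antidiagonal k with p.1 < k,
        (-1) ^ p.1 * s.esymm p.1 * (s.map (· ^ p.2)).sum := by
  classical
  have newton := congrArg (MvPolynomial.aeval fun x : s ↦ (x : R))
    (MvPolynomial.mul_esymm_eq_sum s R k)
  have aeval_psum (j : ℕ) :
      MvPolynomial.aeval (fun x : s ↦ (x : R)) (MvPolynomial.psum s R j) =
        (s.map (· ^ j)).sum := by
    simp only [MvPolynomial.psum, map_sum, map_pow, MvPolynomial.aeval_X]
    exact congrArg Multiset.sum (s.map_univ (· ^ j))
  simpa only [map_mul, map_natCast, map_pow, map_neg, map_one, map_sum, aeval_psum,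
    MvPolynomial.aeval_esymm_eq_multiset_esymm, Multiset.map_univ_coe] using newton

theorem multiset_esymm_eq_of_sum_map_pow_eq {s t : Multiset R} {n : ℕ}
    (hreg : ∀ k : ℕ, 1 ≤ k → k ≤ n → IsLeftRegular (k : R))
    (hpow : ∀ k : ℕ, 1 ≤ k → k ≤ n → (s.map (· ^ k)).sum = (t.map (· ^ k)).sum)
    {k : ℕ} (hk : k ≤ n) : s.esymm k = t.esymm k := by
  induction k using Nat.strong_induction_on with
  | _ k ih =>
    obtain rfl | k_pos := k.eq_zero_or_pos
    · simp only [Multiset.esymm, Multiset.powersetCard_zero_left]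
    apply hreg k k_pos hk
    simp only [natCast_mul_multiset_esymm_eq_sum]
    congr 1
    refine Finset.sum_congr rfl fun p hp ↦ ?_
    obtain ⟨add_eq, fst_lt⟩ : p.1 + p.2 = k ∧ p.1 < k := by
      simpa only [Finset.mem_filter, mem_antidiagonal] using hp
    rw [ih p.1 fst_lt (by lia), hpow p.2 (by lia) (by lia)]

theorem multiset_eq_of_card_eq_of_esymm_eq [IsDomain R] {s t : Multiset R}
    (hcard : s.card = t.card) (hesymm : ∀ k ≤ s.card, s.esymm k = t.esymm k) : s = t := by
  have prod_eq : (s.map fun x ↦ Polynomial.X - Polynomial.C x).prod =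
      (t.map fun x ↦ Polynomial.X - Polynomial.C x).prod := by
    rw [Multiset.prod_X_sub_X_eq_sum_esymm, Multiset.prod_X_sub_X_eq_sum_esymm, ← hcard]
    refine Finset.sum_congr rfl fun k hk ↦ ?_
    rw [hesymm k (Finset.mem_range_succ_iff.mp hk)]
  simpa only [Polynomial.roots_multiset_prod_X_sub_C] using congrArg Polynomial.roots prod_eq

end PowerSums

theorem natCast_ne_zero_of_ringChar_eq_zero_or_lt {R : Type*} [NonAssocSemiring R] {k : ℕ}
    (hk : k ≠ 0) (hchar : ringChar R = 0 ∨ k < ringChar R) : (k : R) ≠ 0 := by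
  rw [Ne, ringChar.spec]
  rcases hchar with char_zero | k_lt
  · rwa [char_zero, zero_dvd_iff]
  · exact Nat.not_dvd_of_pos_of_lt (Nat.pos_of_ne_zero hk) k_lt

theorem stmt2_general {R : Type*} [CommRing R] [IsDomain R] {h : ℕ}
    (hchar : ringChar R = 0 ∨ h < ringChar R) {a b : Multiset R}
    (ha : a.card = h) (hb : b.card = h)
    (hpow : ∀ k : ℕ, 1 ≤ k → k ≤ h → (a.map (· ^ k)).sum = (b.map (· ^ k)).sum) :
    a = b := by
  have natCast_regular (k : ℕ) (one_le : 1 ≤ k) (k_le : k ≤ h) : IsLeftRegular (k : R) :=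
    (IsRegular.of_ne_zero <|
      natCast_ne_zero_of_ringChar_eq_zero_or_lt (Nat.ne_of_gt one_le) <|
        hchar.imp_right k_le.trans_lt).left
  exact multiset_eq_of_card_eq_of_esymm_eq (ha.trans hb.symm) fun k hk ↦
    multiset_esymm_eq_of_sum_map_pow_eq natCast_regular hpow (hk.trans_eq ha)

/-- In a field of characteristic zero or `p > h` (`h ≥ 1`), if two
multisets of `h` elements have equal power sums `∑ aᵢᵏ = ∑ bᵢᵏ` for all `k = 1, …, h`,
then the multisets are equal. -/
theorem stmt2 {F : Type*} [Field F] (h : ℕ) (hh : 1 ≤ h)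
    (hchar : ringChar F = 0 ∨ (Nat.Prime (ringChar F) ∧ h < ringChar F))
    (a b : Multiset F) (ha : Multiset.card a = h) (hb : Multiset.card b = h)
    (hpow : ∀ k : ℕ, 1 ≤ k → k ≤ h →
      (a.map (fun x => x ^ k)).sum = (b.map (fun x => x ^ k)).sum) :
    a = b :=
  stmt2_general (hchar.imp_right And.right) ha hb hpow
end

section
/- Let h ≥ 2, g ≥ 1, d ≥ 1 be integers, let m₁, …, m_d be positive integers, and let g₁, …, g_d be positive integers with gᵢ dividing mᵢ for each i. If B is a B_h[g] set on the group (ℤ/m₁ℤ × ⋯ × ℤ/m_dℤ, +), then the set A := {(b₁ mod (m₁/g₁), …, b_d mod (m_d/g_d)) : (b₁, …, b_d) ∈ B}, obtained by reducing each coordinate of each element of B modulo mᵢ/gᵢ, is a B_h[g·g₁·g₂⋯g_d] set on the group (ℤ/(m₁/g₁)ℤ × ⋯ × ℤ/(m_d/g_d)ℤ, +). -/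
/-!
A homomorphism `φ` maps the representations of `y` over `B` to representations of `φ y` over
`φ '' B`, and every representation of `x` over `φ '' B` arises in this way from some `y` in the
fiber of `x`. So `x` has at most `g` representations for each element of its fiber, and the fibers
of a group homomorphism have at most as many elements as its kernel. The kernel of coordinatewise
reduction modulo `mᵢ / gᵢ` is a product of groups of order `gᵢ`.
-/

section Representations

variable {G H : Type*}

/-- The representations of `x` as an unordered sum of `h` elements of `A`, encoded as multisets;
`IsBhSet A h g` bounds the number of them by `g` for every `x`. -/
def sumRepresentations [AddCommMonoid G] (A : Set G) (h : ℕ) (x : G) : Set (Multiset G) :=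
  {s | s.card = h ∧ (∀ a ∈ s, a ∈ A) ∧ s.sum = x}

theorem isBhSet_iff_encard_le [AddCommMonoid G] {A : Set G} {h g : ℕ} :
    IsBhSet A h g ↔ ∀ x, (sumRepresentations A h x).encard ≤ g := by
  refine forall_congr' fun x ↦ ⟨fun hA ↦ ?_, fun hA S hS ↦ ?_⟩
  · by_contra! hlt
    obtain ⟨T, hT, hTcard⟩ := Set.exists_subset_encard_eq (Order.add_one_le_of_lt hlt)
    have hTfin : T.Finite := Set.finite_of_encard_eq_coe (k := g + 1) (by simpa using hTcard)
    lift T to Finset (Multiset G) using hTfin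
    have hle : T.card ≤ g := hA T fun s hs ↦ hT hs
    rw [Set.encard_coe_eq_coe_finsetCard] at hTcard
    norm_cast at hTcard
    omega
  · have hle : (S : Set (Multiset G)).encard ≤ g := (Set.encard_le_encard hS).trans hA
    simpa using hle

theorem exists_multiset_map_eq_of_forall_mem_image {f : G → H} {B : Set G} {s : Multiset H}
    (hs : ∀ a ∈ s, a ∈ f '' B) : ∃ t : Multiset G, (∀ b ∈ t, b ∈ B) ∧ t.map f = s := by
  induction s using Multiset.induction_on with
  | empty => exact ⟨0, by simp, rfl⟩
  | cons a s ih =>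
    obtain ⟨⟨b, hb, rfl⟩, htail⟩ := Multiset.forall_mem_cons.1 hs
    obtain ⟨t, ht, rfl⟩ := ih htail
    exact ⟨b ::ₘ t, Multiset.forall_mem_cons.2 ⟨hb, ht⟩, Multiset.map_cons f b t⟩

theorem sumRepresentations_image_subset [AddCommMonoid G] [AddCommMonoid H] (φ : G →+ H)
    (B : Set G) (h : ℕ) (x : H) :
    sumRepresentations (φ '' B) h x ⊆
      Multiset.map φ '' ⋃ y ∈ φ ⁻¹' {x}, sumRepresentations B h y := by
  rintro s ⟨hcard, hs, hsum⟩
  obtain ⟨t, ht, rfl⟩ := exists_multiset_map_eq_of_forall_mem_image hs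
  have hfiber : φ t.sum = x := (map_multiset_sum φ t).trans hsum
  exact ⟨t, Set.mem_biUnion hfiber ⟨(Multiset.card_map φ t).symm.trans hcard, ht, rfl⟩, rfl⟩

theorem IsBhSet.image_of_encard_fiber_le [AddCommMonoid G] [AddCommMonoid H] {B : Set G}
    {h g k : ℕ} (hB : IsBhSet B h g) (φ : G →+ H) (hφ : ∀ x, (φ ⁻¹' {x}).encard ≤ k) :
    IsBhSet (φ '' B) h (g * k) := by
  rw [isBhSet_iff_encard_le] at hB ⊢
  intro x
  obtain ⟨F, hF⟩ := (Set.finite_of_encard_le_coe (hφ x)).exists_finset_coe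
  have hFcard : F.card ≤ k := by simpa [← hF] using hφ x
  calc (sumRepresentations (φ '' B) h x).encard
      ≤ (Multiset.map φ '' ⋃ y ∈ φ ⁻¹' {x}, sumRepresentations B h y).encard :=
        Set.encard_le_encard (sumRepresentations_image_subset φ B h x)
    _ ≤ (⋃ y ∈ F, sumRepresentations B h y).encard := by
        simpa only [← hF, Finset.mem_coe] using Set.encard_image_le _ _
    _ ≤ ∑ y ∈ F, (sumRepresentations B h y).encard := F.set_encard_biUnion_le _
    _ ≤ F.card • (g : ℕ∞) := Finset.sum_le_card_nsmul F _ _ fun y _ ↦ hB y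
    _ ≤ ↑(g * k) := by
        rw [nsmul_eq_mul, mul_comm g k]
        exact_mod_cast Nat.mul_le_mul_right g hFcard

end Representations

theorem encard_fiber_le_card_ker {G H : Type*} [AddGroup G] [AddGroup H] (φ : G →+ H) (x : H) :
    (φ ⁻¹' {x}).encard ≤ ENat.card φ.ker := by
  obtain hempty | ⟨y, rfl⟩ := (φ ⁻¹' {x}).eq_empty_or_nonempty
  · simp [hempty]
  · exact (ENat.card_congr (φ.fiberEquivKer y)).le

theorem IsBhSet.image_of_finite_ker {G H : Type*} [AddCommGroup G] [AddCommGroup H] {B : Set G}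
    {h g : ℕ} (hB : IsBhSet B h g) (φ : G →+ H) [Finite φ.ker] :
    IsBhSet (φ '' B) h (g * Nat.card φ.ker) :=
  hB.image_of_encard_fiber_le φ fun x ↦
    (encard_fiber_le_card_ker φ x).trans_eq (ENat.card_eq_coe_natCard φ.ker)

theorem card_ker_piMap {ι : Type*} [Fintype ι] {G H : ι → Type*} [∀ i, AddGroup (G i)]
    [∀ i, AddGroup (H i)] (φ : ∀ i, G i →+ H i) :
    Nat.card (AddMonoidHom.piMap φ).ker = ∏ i, Nat.card (φ i).ker := by
  have hmem (x : ∀ i, G i) : x ∈ (AddMonoidHom.piMap φ).ker ↔ ∀ i, x i ∈ (φ i).ker :=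
    funext_iff
  rw [← Nat.card_pi]
  exact Nat.card_congr ((Equiv.subtypeEquivRight hmem).trans Equiv.subtypePiEquivPi)

theorem card_ker_castHom_mul {m n : ℕ} (hnm : n ∣ m) :
    Nat.card (ZMod.castHom hnm (ZMod n)).toAddMonoidHom.ker * n = m := by
  set φ : ZMod m →+ ZMod n := (ZMod.castHom hnm (ZMod n)).toAddMonoidHom
  have hrange : φ.range = ⊤ := AddMonoidHom.range_eq_top.2 (ZMod.castHom_surjective hnm)
  have hindex : φ.ker.index = n := by simp [AddSubgroup.index_ker, hrange]
  simpa [hindex] using φ.ker.card_mul_index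

theorem card_ker_castHom_div {m k : ℕ} (hm : 0 < m) (hkm : k ∣ m) :
    Nat.card (ZMod.castHom (Nat.div_dvd_of_dvd hkm) (ZMod (m / k))).toAddMonoidHom.ker = k :=
  Nat.eq_of_mul_eq_mul_right (Nat.pos_of_dvd_of_pos (Nat.div_dvd_of_dvd hkm) hm) <|
    (card_ker_castHom_mul _).trans (Nat.mul_div_cancel' hkm).symm

/-- If `B` is a `B_h[g]` set on `ℤ/m₁ × ⋯ × ℤ/m_d` and `gᵢ ∣ mᵢ`, then
reducing each coordinate modulo `mᵢ/gᵢ` yields a `B_h[g·g₁⋯g_d]` set on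
`ℤ/(m₁/g₁) × ⋯ × ℤ/(m_d/g_d)`. -/
theorem stmt5 (d h g : ℕ) (hd : 1 ≤ d) (hh : 2 ≤ h) (hg : 1 ≤ g)
    (m gd : Fin d → ℕ) (hm : ∀ i, 0 < m i) (hgd : ∀ i, 0 < gd i)
    (hdvd : ∀ i, gd i ∣ m i)
    (B : Set (∀ i, ZMod (m i))) (hB : IsBhSet B h g) :
    IsBhSet
      ((fun b : ∀ i, ZMod (m i) => fun i : Fin d =>
          (((b i).val : ℕ) : ZMod (m i / gd i))) '' B)
      h (g * ∏ i, gd i) := by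
  have (i : Fin d) : NeZero (m i) := ⟨(hm i).ne'⟩
  let φ : (∀ i, ZMod (m i)) →+ ∀ i, ZMod (m i / gd i) := AddMonoidHom.piMap fun i ↦
    (ZMod.castHom (Nat.div_dvd_of_dvd (hdvd i)) (ZMod (m i / gd i))).toAddMonoidHom
  have hφ : (fun b i ↦ ((b i).val : ZMod (m i / gd i))) = φ := by
    funext b i
    exact ZMod.natCast_val (b i)
  have hcard : Nat.card φ.ker = ∏ i, gd i :=
    (card_ker_piMap _).trans (Fintype.prod_congr _ _ fun i ↦
      card_ker_castHom_div (hm i) (hdvd i))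
  rw [hφ, ← hcard]
  exact hB.image_of_finite_ker φ
end
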